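/- Suppose E[V(y Z)] < ∞ for every y > 0, where V is the convex conjugate of the utility function U. Let x₀ > 0 and let (fⁿ) be a sequence with fⁿ ∈ C(xₙ) where 0 < xₙ ≤ x₀ for all n. Then the family (U(fⁿ)⁺)_{n∈ℕ} of positive parts is uniformly integrable. -/

import Mathlib

/-!
For every `y > 0` the conjugate inequality `U(x) ≤ V(yZ) + x y Z` gives, for `f ∈ C(x)` with
`x ≤ x₀` and every measurable set `A`,
`E[U(f)⁺ 1_A] ≤ E[V(yZ)⁺ 1_A] + y E[Z f] ≤ E[V(yZ)⁺ 1_A] + y x₀`.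
Choosing first `y` so small that `y x₀ ≤ ε/2`, and then `P(A)` small, absolute continuity of the
integral of the single integrable function `V(yZ)⁺` makes the right side at most `ε`, uniformly
in `f`. The finiteness of `E[V(yZ)⁺]` is what the hypothesis `E[V(yZ)] < ∞` means, once the
negative part `V(yZ)⁻` is known to be integrable; this holds because `V(yZ) ≥ U(1) - yZ`
with `Z` integrable.
-/

open MeasureTheory Filter Set Topology ENNReal

noncomputable section

/-- The utility function extended to all of `ℝ`, with value `−∞` on `(−∞,0)` and
`U(0) := lim_{x ↓ 0} U(x)` (here, by monotonicity, the infimum over `(0,∞)`). -/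
def Uext (U : ℝ → ℝ) : ℝ → EReal := fun x =>
  if 0 < x then (U x : EReal)
  else if x = 0 then ⨅ z : {z : ℝ // 0 < z}, ((U z.1 : ℝ) : EReal)
  else ⊥

/-- A (possibly non-concave) utility function. -/
structure IsUtility (U : ℝ → ℝ) : Prop where
  mono : ∀ ⦃x y : ℝ⦄, 0 < x → x ≤ y → U x ≤ U y
  nonconst : ∃ x y : ℝ, 0 < x ∧ 0 < y ∧ U x ≠ U y
  usc : UpperSemicontinuousOn U (Set.Ioi 0)
  growth : Filter.Tendsto (fun x => U x / x) Filter.atTop (nhds 0)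
  pos_limit : ∃ x : ℝ, 0 < x ∧ 0 < U x

/-- Concavity for `EReal`-valued functions on `ℝ`. -/
def ERealConcave (g : ℝ → EReal) : Prop :=
  ∀ x y : ℝ, ∀ t : ℝ, 0 ≤ t → t ≤ 1 →
    ((t : ℝ) : EReal) * g x + (((1 - t) : ℝ) : EReal) * g y ≤ g (t * x + (1 - t) * y)

/-- `Uc` is the concave envelope of the utility `U`: the smallest concave function
dominating (the extension of) `U`. -/
def IsConcaveEnvelope (U : ℝ → ℝ) (Uc : ℝ → EReal) : Prop :=
  ERealConcave Uc ∧ (∀ x : ℝ, Uext U x ≤ Uc x) ∧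
    ∀ g : ℝ → EReal, ERealConcave g → (∀ x : ℝ, Uext U x ≤ g x) → ∀ x : ℝ, Uc x ≤ g x

/-- The convex conjugate `V(y) = sup_{x > 0} (U(x) − x y)`. -/
def conj (U : ℝ → ℝ) (y : ℝ) : ℝ :=
  sSup ((fun x => U x - x * y) '' Set.Ioi (0 : ℝ))

/-- The subdifferential of a convex function `V` (viewed on `(0,∞)`). -/
def subdiff (V : ℝ → ℝ) (y : ℝ) : Set ℝ :=
  {q : ℝ | ∀ z : ℝ, 0 < z → V y + q * (z - y) ≤ V z}

/-- The extended asymptotic elasticity `EAE(V) = limsup_{y ↓ 0} sup_{q ∈ ∂V(y)} |q| y / V(y)`. -/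
def EAE (V : ℝ → ℝ) : EReal :=
  Filter.limsup (fun y : ℝ => ⨆ q ∈ subdiff V y, (((|q| * y / V y) : ℝ) : EReal))
    (nhdsWithin (0 : ℝ) (Set.Ioi 0))

/-- The positive part of an extended real number, as an element of `ℝ≥0∞`. -/
def erealPos (a : EReal) : ℝ≥0∞ := if a = ⊤ then ⊤ else ENNReal.ofReal a.toReal

/-- The expectation of an `EReal`-valued function: `E[g] = E[g⁺] − E[g⁻]`, with the
convention `E[g] = −∞` whenever the negative part `g⁻` is not integrable. -/
def eexp {Ω : Type*} [MeasurableSpace Ω] (μ : Measure Ω) (g : Ω → EReal) : EReal :=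
  if (∫⁻ ω, erealPos (-(g ω)) ∂μ) < ⊤ then
    ((∫⁻ ω, erealPos (g ω) ∂μ : ℝ≥0∞) : EReal) - (((∫⁻ ω, erealPos (-(g ω)) ∂μ).toReal : ℝ) : EReal)
  else ⊥

/-- The set `C(x)` of attainable terminal liquidation values: nonnegative measurable `f`
with `E[Z f] ≤ x`. -/
def Cset {Ω : Type*} [MeasurableSpace Ω] (μ : Measure Ω) (Z : Ω → ℝ) (x : ℝ) :
    Set (Ω → ℝ) :=
  {f | Measurable f ∧ (∀ ω, 0 ≤ f ω) ∧
    (∫⁻ ω, ENNReal.ofReal (Z ω * f ω) ∂μ) ≤ ENNReal.ofReal x}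

/-- The value function `u(x, W) = sup {E[W(f)] : f ∈ C(x)}`. -/
def valueFn {Ω : Type*} [MeasurableSpace Ω] (μ : Measure Ω) (Z : Ω → ℝ)
    (W : ℝ → EReal) (x : ℝ) : EReal :=
  ⨆ f ∈ Cset μ Z x, eexp μ (fun ω => W (f ω))

end


/-- The growth condition makes the supremum defining `conj U y` finite. -/
lemma conj_bddAbove {U : ℝ → ℝ} (hU : IsUtility U) {y : ℝ} (hy : 0 < y) :
    BddAbove ((fun x => U x - x * y) '' Set.Ioi (0 : ℝ)) := by
  have h1 : ∀ᶠ x in atTop, U x / x < y := hU.growth.eventually (gt_mem_nhds hy)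
  obtain ⟨M, hM⟩ := eventually_atTop.1 h1
  set M' := max M 1
  refine ⟨max (U M') 0, ?_⟩
  rintro _ ⟨x, hx, rfl⟩
  have hx : 0 < x := hx
  rcases le_total x M' with h | h
  · have := hU.mono hx h
    have := mul_pos hx hy
    exact le_max_of_le_left (by dsimp only; linarith)
  · have := hM x ((le_max_left _ _).trans h)
    rw [div_lt_iff₀ hx] at this
    exact le_max_of_le_right (by dsimp only; linarith)

/-- The Fenchel–Young inequality. -/
lemma le_conj {U : ℝ → ℝ} (hU : IsUtility U) {x y : ℝ} (hx : 0 < x) (hy : 0 < y) :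
    U x - x * y ≤ conj U y :=
  le_csSup (conj_bddAbove hU hy) ⟨x, hx, rfl⟩

lemma Uext_mono {U : ℝ → ℝ} (hU : IsUtility U) : Monotone (Uext U) := by
  intro a b hab
  unfold Uext
  rcases lt_trichotomy a 0 with ha | rfl | ha
  · rw [if_neg ha.not_gt, if_neg ha.ne]
    exact bot_le
  · rcases hab.eq_or_lt with rfl | hb
    · exact le_rfl
    · rw [if_neg (lt_irrefl _), if_pos rfl, if_pos hb]
      exact iInf_le (fun z : {z : ℝ // 0 < z} => ((U z.1 : ℝ) : EReal)) ⟨b, hb⟩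
  · rw [if_pos ha, if_pos (ha.trans_le hab)]
    exact_mod_cast hU.mono ha hab

lemma Uext_lt_top {U : ℝ → ℝ} (hU : IsUtility U) (x : ℝ) : Uext U x < ⊤ := by
  have hp : (0 : ℝ) < max x 1 := lt_max_of_lt_right one_pos
  refine (Uext_mono hU (le_max_left x 1)).trans_lt ?_
  rw [Uext, if_pos hp]
  exact EReal.coe_lt_top _

lemma pos_part_monotone {U : ℝ → ℝ} (hU : IsUtility U) :
    Monotone fun x => ((Uext U x) ⊔ 0).toReal := by
  intro a b hab
  refine EReal.toReal_le_toReal (sup_le_sup_right (Uext_mono hU hab) 0) ?_ ?_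
  · exact ((EReal.bot_lt_zero).trans_le le_sup_right).ne'
  · exact (max_lt (Uext_lt_top hU b) EReal.zero_lt_top).ne

/-- The Fenchel–Young inequality for positive parts, including the boundary point `x = 0`. -/
lemma pos_part_le {U : ℝ → ℝ} (hU : IsUtility U) {x y : ℝ} (hx : 0 ≤ x) (hy : 0 < y) :
    ((Uext U x) ⊔ 0).toReal ≤ max (conj U y) 0 + x * y := by
  -- By monotonicity it suffices to use the inequality at points `z > x` and let `z` tend to `x`.
  have key : ∀ z, x < z → ((Uext U x) ⊔ 0).toReal ≤ max (conj U y) 0 + z * y := by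
    intro z hz
    have hz0 : 0 < z := hx.trans_lt hz
    refine (pos_part_monotone hU hz.le).trans ?_
    have e : (Uext U z ⊔ 0).toReal = max (U z) 0 := by
      rw [Uext, if_pos hz0]
      rcases le_total (U z) 0 with h | h
      · rw [max_eq_right h, sup_eq_right.2 (by exact_mod_cast h), EReal.toReal_zero]
      · rw [max_eq_left h, sup_eq_left.2 (by exact_mod_cast h), EReal.toReal_coe]
    have h1 := le_conj hU hz0 hy
    have h2 := mul_pos hz0 hy
    have h3 := le_max_left (conj U y) 0
    have h4 := le_max_right (conj U y) 0
    dsimp only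
    rw [e]
    exact max_le (by linarith) (by linarith)
  have hc : Tendsto (fun z => max (conj U y) 0 + z * y) (𝓝[>] x)
      (𝓝 (max (conj U y) 0 + x * y)) :=
    Tendsto.mono_left (by fun_prop : Continuous fun z => max (conj U y) 0 + z * y).continuousAt
      nhdsWithin_le_nhds
  exact ge_of_tendsto hc (eventually_mem_nhdsWithin.mono key)

/-- `E[V(yZ)] < ∞` forces `E[V(yZ)⁺] < ∞`, since `V(yZ)⁻ ≤ (yZ - U(1))⁺` is integrable. -/
lemma lintegral_conj_ne_top {Ω : Type*} [MeasurableSpace Ω] {μ : Measure Ω}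
    [IsProbabilityMeasure μ] {Z : Ω → ℝ} (hZpos : ∀ ω, 0 < Z ω) (hZint : Integrable Z μ)
    {U : ℝ → ℝ} (hU : IsUtility U) {y : ℝ} (hy : 0 < y)
    (hV : eexp μ (fun ω => ((conj U (y * Z ω) : ℝ) : EReal)) < ⊤) :
    ∫⁻ ω, ENNReal.ofReal (conj U (y * Z ω)) ∂μ ≠ ⊤ := by
  have hpos : ∀ r : ℝ, erealPos (r : EReal) = ENNReal.ofReal r := fun r => by
    rw [erealPos, if_neg (EReal.coe_ne_top r), EReal.toReal_coe]
  have hneg : ∀ r : ℝ, erealPos (-(r : EReal)) = ENNReal.ofReal (-r) := fun r => by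
    rw [← EReal.coe_neg, hpos]
  have hi : Integrable (fun ω => y * Z ω - U 1) μ :=
    (hZint.const_mul y).sub (integrable_const _)
  have hfin : ∫⁻ ω, ENNReal.ofReal (-conj U (y * Z ω)) ∂μ < ⊤ := by
    refine (lintegral_mono fun ω => ENNReal.ofReal_le_ofReal ?_).trans_lt hi.lintegral_lt_top
    have := le_conj hU one_pos (mul_pos hy (hZpos ω))
    linarith
  intro htop
  unfold eexp at hV
  simp only [hpos, hneg] at hV
  rw [if_pos hfin, htop, EReal.coe_ennreal_top, EReal.top_sub_coe] at hV
  exact lt_irrefl _ hV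

/-- The uniform estimate `E[U(f)⁺ 1_A] ≤ E[V(yZ)⁺ 1_A] + y x₀`. -/
lemma setLIntegral_pos_part_le {Ω : Type*} [MeasurableSpace Ω] {μ : Measure Ω}
    {Z : Ω → ℝ} (hZmeas : Measurable Z) (hZpos : ∀ ω, 0 < Z ω)
    {U : ℝ → ℝ} (hU : IsUtility U) {y : ℝ} (hy : 0 < y) {x x₀ : ℝ} (hx : x ≤ x₀)
    {f : Ω → ℝ} (hf : f ∈ Cset μ Z x) (s : Set Ω) :
    ∫⁻ ω in s, ‖((Uext U (f ω)) ⊔ 0).toReal‖ₑ ∂μ ≤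
      (∫⁻ ω in s, ENNReal.ofReal (conj U (y * Z ω)) ∂μ) + ENNReal.ofReal (y * x₀) := by
  obtain ⟨hfm, hf0, hfx⟩ := hf
  calc ∫⁻ ω in s, ‖((Uext U (f ω)) ⊔ 0).toReal‖ₑ ∂μ
      ≤ ∫⁻ ω in s, (ENNReal.ofReal (conj U (y * Z ω))
          + ENNReal.ofReal y * ENNReal.ofReal (Z ω * f ω)) ∂μ := by
        refine lintegral_mono fun ω => ?_
        have h0 : 0 ≤ ((Uext U (f ω)) ⊔ 0).toReal := EReal.toReal_nonneg le_sup_right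
        rw [Real.enorm_of_nonneg h0, ← ENNReal.ofReal_mul hy.le]
        refine (ENNReal.ofReal_le_ofReal
          (pos_part_le hU (hf0 ω) (mul_pos hy (hZpos ω)))).trans ?_
        refine ENNReal.ofReal_add_le.trans (le_of_eq ?_)
        congr 1
        · simp [ENNReal.ofReal, Real.toNNReal]
        · congr 1; ring
    _ = (∫⁻ ω in s, ENNReal.ofReal (conj U (y * Z ω)) ∂μ)
          + ENNReal.ofReal y * ∫⁻ ω in s, ENNReal.ofReal (Z ω * f ω) ∂μ := by
        rw [lintegral_add_right _ (by fun_prop), lintegral_const_mul _ (by fun_prop)]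
    _ ≤ _ := by
        rw [ENNReal.ofReal_mul hy.le]
        gcongr
        exact (setLIntegral_le_lintegral _ _).trans (hfx.trans (ENNReal.ofReal_le_ofReal hx))

/-- For `fⁿ ∈ C(xₙ)` with `0 < xₙ ≤ x₀`, the family of positive parts `(U(fⁿ)⁺)ₙ`
is uniformly integrable. -/
theorem positive_parts_uniformly_integrable
    {Ω : Type*} [MeasurableSpace Ω] (μ : MeasureTheory.Measure Ω)
    [MeasureTheory.IsProbabilityMeasure μ]
    (Z : Ω → ℝ) (hZmeas : Measurable Z) (hZpos : ∀ ω, 0 < Z ω)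
    (hZint : MeasureTheory.Integrable Z μ) (hZexp : ∫ ω, Z ω ∂μ = 1)
    (U : ℝ → ℝ) (hU : IsUtility U)
    (hV : ∀ y : ℝ, 0 < y → eexp μ (fun ω => ((conj U (y * Z ω) : ℝ) : EReal)) < ⊤)
    (x₀ : ℝ) (hx₀ : 0 < x₀) (xs : ℕ → ℝ) (hxs : ∀ n, 0 < xs n ∧ xs n ≤ x₀)
    (f : ℕ → Ω → ℝ) (hf : ∀ n, f n ∈ Cset μ Z (xs n)) :
    MeasureTheory.UniformIntegrable
      (fun n ω => ((Uext U (f n ω)) ⊔ 0).toReal) 1 μ := by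
  have hW := fun {y : ℝ} (hy : 0 < y) => lintegral_conj_ne_top hZpos hZint hU hy (hV y hy)
  have hest := fun (n : ℕ) {y : ℝ} (hy : 0 < y) (s : Set Ω) =>
    setLIntegral_pos_part_le hZmeas hZpos hU hy (hxs n).2 (hf n) s
  refine ⟨fun n => ((pos_part_monotone hU).measurable.comp (hf n).1).aestronglyMeasurable,
    ?_, ?_⟩
  · intro ε hε
    have hy : 0 < ε / (2 * x₀) := by positivity
    obtain ⟨δ, hδ, hs⟩ := exists_pos_setLIntegral_lt_of_measure_lt (hW hy)
      (ε := ENNReal.ofReal (ε / 2)) (by positivity)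
    -- `δ` may be infinite, hence a positive real number strictly below it is needed.
    obtain ⟨d, hd0, hdδ⟩ := ENNReal.lt_iff_exists_nnreal_btwn.1 hδ
    refine ⟨d, by exact_mod_cast hd0, fun n s hms hμs => ?_⟩
    rw [ENNReal.ofReal_coe_nnreal] at hμs
    rw [eLpNorm_indicator_eq_eLpNorm_restrict hms, eLpNorm_one_eq_lintegral_enorm]
    refine (hest n hy s).trans ((add_le_add_left (hs s (hμs.trans_lt hdδ)).le _).trans ?_)
    have e : ε / (2 * x₀) * x₀ = ε / 2 := by field_simp
    rw [e, ← ENNReal.ofReal_add (by positivity) (by positivity), add_halves]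
  · have hC : (∫⁻ ω, ENNReal.ofReal (conj U (1 * Z ω)) ∂μ) + ENNReal.ofReal (1 * x₀) ≠ ⊤ :=
      ENNReal.add_ne_top.2 ⟨hW one_pos, ENNReal.ofReal_ne_top⟩
    refine ⟨((∫⁻ ω, ENNReal.ofReal (conj U (1 * Z ω)) ∂μ)
      + ENNReal.ofReal (1 * x₀)).toNNReal, fun n => ?_⟩
    rw [eLpNorm_one_eq_lintegral_enorm, ENNReal.coe_toNNReal hC]
    simpa only [Measure.restrict_univ] using hest n one_pos Set.univ
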